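/- arXiv:2302.10554 — 3 statements merged into one kernel-verified Lean document; each statement's English description precedes it below -/
import Mathlib

section
/- Let Γ be a nontrivial additive abelian group and let G be a finite simple graph admitting a Γ-vertex magic labeling. If u is a vertex with deg(u) ≠ 1 and v is a pendant vertex of G with dist_G(u, v) = 2, then deg(u) ≥ 3. -/
/-!
A pendant vertex `v` has a single neighbor `w`, so its weight is `ℓ w`. If `u` is at distance two
from `v`, then `w` is also a neighbor of `u`, and since the weights of `u` and `v` agree, the labels
of the other neighbors of `u` sum to zero. A single nonzero label cannot do that, so `deg u ≠ 2`.
-/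

section Sum

variable {ι M : Type*} {s : Finset ι} {f : ι → M} {i : ι}

theorem card_ne_two_of_sum_eq_apply [AddCancelCommMonoid M] (hf : ∀ j ∈ s, f j ≠ 0)
    (hi : i ∈ s) (hsum : ∑ j ∈ s, f j = f i) : s.card ≠ 2 := by
  classical
  intro hcard
  obtain ⟨j, hij, hs⟩ : ∃ j, i ≠ j ∧ s = {i, j} := by
    obtain ⟨a, b, hab, rfl⟩ := Finset.card_eq_two.mp hcard
    obtain rfl | rfl : i = a ∨ i = b := by simpa using hi
    · exact ⟨b, hab, rfl⟩
    · exact ⟨a, hab.symm, Finset.pair_comm a i⟩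
  have hj : f j = 0 := by rwa [hs, Finset.sum_pair hij, add_eq_left] at hsum
  exact hf j (by simp [hs]) hj

end Sum

section Graph

variable {V : Type*} {G : SimpleGraph V} {u v w : V}

theorem commonNeighbors_nonempty_of_dist_eq_two (hd : G.dist u v = 2) :
    (G.commonNeighbors u v).Nonempty := by
  have hedist : G.edist u v = 2 := (ENat.toNat_eq_iff two_ne_zero).mp hd
  exact (SimpleGraph.edist_eq_two_iff.mp hedist).2.2

theorem neighborFinset_eq_singleton_of_degree_eq_one [Fintype (G.neighborSet v)]
    (hv : G.degree v = 1) (hvw : G.Adj v w) : G.neighborFinset v = {w} :=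
  (Finset.eq_of_subset_of_card_le (by simpa using hvw) (by simp [hv])).symm

theorem sum_neighborFinset_of_degree_eq_one {M : Type*} [AddCommMonoid M]
    [Fintype (G.neighborSet v)] (hv : G.degree v = 1) (hvw : G.Adj v w) (f : V → M) :
    ∑ x ∈ G.neighborFinset v, f x = f w := by
  rw [neighborFinset_eq_singleton_of_degree_eq_one hv hvw, Finset.sum_singleton]

end Graph

theorem stmt_3_general {V M : Type*} [AddCancelCommMonoid M] {G : SimpleGraph V} {u v : V}
    [Fintype (G.neighborSet u)] [Fintype (G.neighborSet v)] {ℓ : V → M}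
    (hnz : ∀ x ∈ G.neighborFinset u, ℓ x ≠ 0)
    (hweight : ∑ x ∈ G.neighborFinset u, ℓ x = ∑ x ∈ G.neighborFinset v, ℓ x)
    (hu : G.degree u ≠ 1) (hv : G.degree v = 1) (hd : G.dist u v = 2) : 3 ≤ G.degree u := by
  obtain ⟨w, huw, hvw⟩ := commonNeighbors_nonempty_of_dist_eq_two hd
  have hsum : ∑ x ∈ G.neighborFinset u, ℓ x = ℓ w :=
    hweight.trans (sum_neighborFinset_of_degree_eq_one hv hvw ℓ)
  have hpos : 0 < G.degree u := (G.degree_pos_iff_exists_adj u).mpr ⟨w, huw⟩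
  have hne_two : G.degree u ≠ 2 :=
    card_ne_two_of_sum_eq_apply hnz ((G.mem_neighborFinset u w).mpr huw) hsum
  omega

/-- If a finite simple graph `G` admits a `Γ`-vertex magic labeling
(`Γ` nontrivial abelian), `u` is a vertex with `deg u ≠ 1`, and `v` is a pendant vertex
with `dist(u,v) = 2`, then `deg u ≥ 3`. -/
theorem stmt_3 {V Γ : Type*} [Fintype V] [DecidableEq V]
    [AddCommGroup Γ] [Nontrivial Γ]
    (G : SimpleGraph V) [DecidableRel G.Adj]
    (ℓ : V → Γ) (μ : Γ)
    (hnz : ∀ w, ℓ w ≠ 0)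
    (hmagic : ∀ w, ∑ x ∈ G.neighborFinset w, ℓ x = μ)
    (u v : V) (hu : G.degree u ≠ 1) (hv : G.degree v = 1) (hd : G.dist u v = 2) :
    3 ≤ G.degree u :=
  stmt_3_general (fun x _ ↦ hnz x) ((hmagic u).trans (hmagic v).symm) hu hv hd
end

section
/- Let Γ be an infinite additive abelian torsion group (every element of Γ has finite additive order). Let T be a finite tree of diameter 4 with central vertex v_c (the unique vertex with dist(v_c, u) ≤ 2 for every vertex u). Then T is Γ-vertex magic if and only if one of the following holds: (i) every non-pendant vertex of T is a strong support vertex; (ii) v_c is a weak support vertex, every non-pendant vertex other than v_c is a strong support vertex, and there exists g ∈ Γ, g ≠ 0, with ((deg(v_c) : ℤ) − 2) • g ≠ 0; (iii) v_c is a neutral vertex and there exists g ∈ Γ, g ≠ 0, with ((deg(v_c) : ℤ) − 1) • g = 0. -/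
/-!
Pendant vertices have a single neighbour, so in a magic labeling every support vertex carries the
magic constant `μ`. Hence only the labels of inner vertices and of the pendant vertices around each
inner vertex are to be chosen, and for the latter only the sum matters. In a group with at least
three elements, nonzero labels on a finite set of size `n` can have any sum, except that the sum is
`0` for `n = 0` and nonzero for `n = 1`.

In a tree with centre `c` and radius two, the inner vertices are `c`, with label `a`, say, and
support vertices adjacent to `c` only, with label `μ`. The pendant labels around the latter sum to
`μ - a`. If `c` has `p` pendant neighbours, the pendant labels around `c` sum to
`μ - (deg c - p) • μ`; this has to vanish for `p = 0`, which is `(deg c - 1) • μ = 0`, and must not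
vanish for `p = 1`, which is `(deg c - 2) • μ ≠ 0`. If `p ≠ 0` then `a = μ`, which forces every
inner vertex other than `c` to have at least two pendant neighbours; if `p = 0`, any `a` other than
`0` and `μ` will do.
-/

open Finset

section NonzeroSum

variable {ι Γ : Type*}

/-- The element `t` is a sum of nonzero elements indexed by the finite set `s`: the labels of the
pendant neighbours of a vertex enter a magic labeling only through such a sum. -/
def HasNonzeroSum [AddCommMonoid Γ] (s : Finset ι) (t : Γ) : Prop :=
  ∃ f : ι → Γ, (∀ i ∈ s, f i ≠ 0) ∧ ∑ i ∈ s, f i = t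

lemma hasNonzeroSum_empty [AddCommMonoid Γ] {t : Γ} : HasNonzeroSum (∅ : Finset ι) t ↔ t = 0 := by
  simp [HasNonzeroSum, eq_comm]

variable [AddCommGroup Γ]

lemma hasNonzeroSum_cons {a : ι} {s : Finset ι} (ha : a ∉ s) {t : Γ} :
    HasNonzeroSum (cons a s ha) t ↔ ∃ g ≠ 0, HasNonzeroSum s (t - g) := by
  classical
  simp only [HasNonzeroSum, forall_mem_cons, sum_cons]
  constructor
  · rintro ⟨f, ⟨hfa, hfs⟩, rfl⟩
    exact ⟨f a, hfa, f, hfs, (add_sub_cancel_left _ _).symm⟩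
  · rintro ⟨g, hg, f, hfs, hsum⟩
    refine ⟨Function.update f a g, ⟨by simpa using hg, fun i hi => ?_⟩, ?_⟩
    · rw [Function.update_of_ne (ne_of_mem_of_not_mem hi ha)]
      exact hfs i hi
    · rw [sum_update_of_notMem ha, hsum, Function.update_self, add_sub_cancel]

lemma hasNonzeroSum_iff (hΓ : 3 ≤ ENat.card Γ) {s : Finset ι} {t : Γ} :
    HasNonzeroSum s t ↔ (#s = 0 → t = 0) ∧ (#s = 1 → t ≠ 0) := by
  induction s using Finset.cons_induction generalizing t with
  | empty => simp [hasNonzeroSum_empty]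
  | cons a s ha ih =>
    simp only [hasNonzeroSum_cons, ih, card_cons, sub_ne_zero, sub_eq_zero]
    rcases #s with _ | n
    · simp
    · obtain ⟨g, hg, hgt⟩ := ENat.exists_ne_ne_of_three_le hΓ 0 t
      simpa using ⟨g, hg, fun _ => hgt.symm⟩

end NonzeroSum

section Distance

variable {V : Type*} {G : SimpleGraph V} {a b c x y z : V}

lemma exists_adj_dist_add_one_eq (hG : G.Connected) (hx : x ≠ c) :
    ∃ y, G.Adj x y ∧ G.dist c y + 1 = G.dist c x := by
  obtain ⟨p, hp⟩ := hG.exists_walk_length_eq_dist x c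
  cases p with
  | nil => exact absurd rfl hx
  | @cons _ y _ hxy p =>
    refine ⟨y, hxy, ?_⟩
    rw [SimpleGraph.Walk.length_cons, SimpleGraph.dist_comm] at hp
    have hyc := SimpleGraph.dist_comm (G := G) (u := c) (v := y) ▸ SimpleGraph.dist_le p
    have hcx := hxy.diff_dist_adj (u := c)
    lia

lemma eq_of_adj_of_dist_add_one_eq (hG : G.IsTree) (hxy : G.Adj x y) (hxz : G.Adj x z)
    (hy : G.dist c y + 1 = G.dist c x) (hz : G.dist c z + 1 = G.dist c x) : y = z := by
  obtain ⟨p, hp⟩ := hG.connected.exists_walk_length_eq_dist c y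
  obtain ⟨q, hq⟩ := hG.connected.exists_walk_length_eq_dist c z
  have hp' : (p.concat hxy.symm).IsPath :=
    SimpleGraph.Walk.isPath_of_length_eq_dist _ (by rw [SimpleGraph.Walk.length_concat, hp, hy])
  have hq' : (q.concat hxz.symm).IsPath :=
    SimpleGraph.Walk.isPath_of_length_eq_dist _ (by rw [SimpleGraph.Walk.length_concat, hq, hz])
  simpa using congrArg SimpleGraph.Walk.penultimate ((hG.existsUnique_path c x).unique hp' hq')

lemma degree_eq_one_of_forall_adj_dist_le (hG : G.IsTree) [Fintype (G.neighborSet x)] (hx : x ≠ c)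
    (hmax : ∀ y, G.Adj x y → G.dist c y ≤ G.dist c x) : G.degree x = 1 := by
  obtain ⟨y, hxy, hy⟩ := exists_adj_dist_add_one_eq hG.connected hx
  refine SimpleGraph.degree_eq_one_iff_existsUnique_adj.2 ⟨y, hxy, fun z hxz => ?_⟩
  have hz := hG.dist_eq_dist_add_one_of_adj c hxz
  have hzx := hmax z hxz
  exact eq_of_adj_of_dist_add_one_eq hG hxz hxy (by lia) hy

lemma two_le_degree_of_dist_eq_add (hG : G.Connected) [Fintype (G.neighborSet c)]
    (hac : a ≠ c) (hbc : b ≠ c) (hab : G.dist a b = G.dist a c + G.dist c b) :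
    2 ≤ G.degree c := by
  obtain ⟨x, hcx, hx⟩ := exists_adj_dist_add_one_eq hG hac.symm
  obtain ⟨y, hcy, hy⟩ := exists_adj_dist_add_one_eq hG hbc.symm
  rw [← G.card_neighborFinset_eq_degree]
  refine one_lt_card.2 ⟨x, by simpa using hcx, y, by simpa using hcy, ?_⟩
  rintro rfl
  have htri := hG.dist_triangle (u := a) (v := x) (w := b)
  rw [SimpleGraph.dist_comm (u := x)] at htri
  rw [SimpleGraph.dist_comm (u := c)] at hab
  lia

lemma two_le_degree_of_dist_eq_four (hG : G.Connected) [Fintype (G.neighborSet c)]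
    (hab : G.dist a b = 4) (ha : G.dist c a ≤ 2) (hb : G.dist c b ≤ 2) : 2 ≤ G.degree c := by
  have htri := hG.dist_triangle (u := a) (v := c) (w := b)
  rw [SimpleGraph.dist_comm] at ha
  refine two_le_degree_of_dist_eq_add (a := a) (b := b) hG ?_ ?_ (by lia) <;> rintro rfl <;>
    rw [SimpleGraph.dist_self] at htri <;> lia

end Distance

section Pendant

variable {V : Type*} {T : SimpleGraph V} {u v x : V}

lemma neighborFinset_eq_singleton_of_degree_eq_one_s13 [Fintype (T.neighborSet v)]
    (hvx : T.Adj v x) (hv : T.degree v = 1) : T.neighborFinset v = {x} := by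
  obtain ⟨y, hy⟩ := card_eq_one.1 ((T.card_neighborFinset_eq_degree v).trans hv)
  obtain rfl : x = y := mem_singleton.1 (hy ▸ (T.mem_neighborFinset v x).2 hvx)
  exact hy

variable [T.LocallyFinite]

lemma eq_or_eq_of_walk_of_degree_eq_one (huv : T.Adj u v) (hu : T.degree u = 1)
    (hv : T.degree v = 1) (p : T.Walk u x) : x = u ∨ x = v := by
  induction p generalizing v with
  | nil => exact .inl rfl
  | @cons u w _ huw _ ih =>
    have hwv : w = v := by
      simpa [neighborFinset_eq_singleton_of_degree_eq_one_s13 huv hu] using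
        (T.mem_neighborFinset u w).2 huw
    subst hwv
    exact (ih huv.symm hv hu).symm

lemma degree_ne_one_of_adj_of_degree_eq_one (hT : T.Connected) (hx : 2 ≤ T.degree x)
    (huv : T.Adj u v) (hu : T.degree u = 1) : T.degree v ≠ 1 := by
  intro hv
  obtain ⟨p⟩ := hT.preconnected u x
  rcases eq_or_eq_of_walk_of_degree_eq_one huv hu hv p with rfl | rfl <;> lia

variable (T) in
/-- The neighbours of a vertex that are pendant vertices. -/
def pendantNeighbors (x : V) : Finset V :=
  {y ∈ T.neighborFinset x | T.degree y = 1}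

variable (T) in
/-- The neighbours of a vertex that are not pendant vertices. -/
def innerNeighbors (x : V) : Finset V :=
  {y ∈ T.neighborFinset x | ¬ T.degree y = 1}

lemma mem_pendantNeighbors : v ∈ pendantNeighbors T x ↔ T.Adj x v ∧ T.degree v = 1 := by
  simp [pendantNeighbors]

lemma mem_innerNeighbors : v ∈ innerNeighbors T x ↔ T.Adj x v ∧ T.degree v ≠ 1 := by
  simp [innerNeighbors]

lemma card_pendantNeighbors_add_card_innerNeighbors :
    #(pendantNeighbors T x) + #(innerNeighbors T x) = T.degree x :=
  (card_filter_add_card_filter_not _).trans (T.card_neighborFinset_eq_degree x)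

lemma sub_card_innerNeighbors_nsmul {Γ : Type*} [AddCommGroup Γ] (μ : Γ) :
    μ - #(innerNeighbors T x) • μ
      = -(((T.degree x : ℤ) - (#(pendantNeighbors T x) + 1)) • μ) := by
  rw [← card_pendantNeighbors_add_card_innerNeighbors, ← natCast_zsmul]
  push_cast
  module

lemma sum_pendantNeighbors_add_sum_innerNeighbors {Γ : Type*} [AddCommMonoid Γ] (ℓ : V → Γ) :
    ∑ y ∈ pendantNeighbors T x, ℓ y + ∑ y ∈ innerNeighbors T x, ℓ y
      = ∑ y ∈ T.neighborFinset x, ℓ y :=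
  sum_filter_add_sum_filter_not _ _ _

variable (T) in
/-- A strong support vertex: one with at least two pendant neighbours. -/
def IsStrongSupport (x : V) : Prop :=
  ∃ a b : V, a ≠ b ∧ T.Adj x a ∧ T.Adj x b ∧ T.degree a = 1 ∧ T.degree b = 1

variable (T) in
/-- A weak support vertex: one with exactly one pendant neighbour. -/
def IsWeakSupport (x : V) : Prop :=
  ∃! u : V, T.Adj x u ∧ T.degree u = 1

variable (T) in
/-- A neutral vertex: one that is neither a pendant nor a support vertex. -/
def IsNeutral (x : V) : Prop :=
  T.degree x ≠ 1 ∧ ¬ ∃ u : V, T.Adj x u ∧ T.degree u = 1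

lemma isStrongSupport_iff : IsStrongSupport T x ↔ 2 ≤ #(pendantNeighbors T x) := by
  rw [Nat.succ_le_iff, one_lt_card]
  simp only [mem_pendantNeighbors, IsStrongSupport]
  grind

lemma isWeakSupport_iff : IsWeakSupport T x ↔ #(pendantNeighbors T x) = 1 := by
  simp only [card_eq_one, eq_singleton_iff_unique_mem, mem_pendantNeighbors, IsWeakSupport,
    ExistsUnique]

lemma isNeutral_iff : IsNeutral T x ↔ T.degree x ≠ 1 ∧ #(pendantNeighbors T x) = 0 := by
  simp only [card_eq_zero, eq_empty_iff_forall_notMem, mem_pendantNeighbors, IsNeutral, not_exists]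

end Pendant

section MagicLabeling

variable {V : Type*} {T : SimpleGraph V} [T.LocallyFinite] {Γ : Type*} [AddCommMonoid Γ]
  {ℓ : V → Γ} {μ : Γ} {v x : V}

variable (T) in
/-- A `Γ`-vertex magic labeling `ℓ` of `T` with magic constant `μ`. -/
def IsMagicLabeling (ℓ : V → Γ) (μ : Γ) : Prop :=
  (∀ w, ℓ w ≠ 0) ∧ ∀ w, ∑ x ∈ T.neighborFinset w, ℓ x = μ

variable (T Γ) in
/-- The graph `T` is `Γ`-vertex magic. -/
def IsVertexMagic : Prop :=
  ∃ (ℓ : V → Γ) (μ : Γ), IsMagicLabeling T ℓ μ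

lemma IsMagicLabeling.apply_eq_of_adj (hℓ : IsMagicLabeling T ℓ μ) (hvx : T.Adj v x)
    (hv : T.degree v = 1) : ℓ x = μ := by
  rw [← hℓ.2 v, neighborFinset_eq_singleton_of_degree_eq_one_s13 hvx hv, sum_singleton]

lemma IsMagicLabeling.constant_ne_zero (hℓ : IsMagicLabeling T ℓ μ) (hv : T.degree v = 1) :
    μ ≠ 0 := by
  obtain ⟨x, hvx, -⟩ := SimpleGraph.degree_eq_one_iff_existsUnique_adj.1 hv
  exact hℓ.apply_eq_of_adj hvx hv ▸ hℓ.1 x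

end MagicLabeling

section MagicCore

variable {V Γ : Type*} [AddCommGroup Γ] {T : SimpleGraph V} [T.LocallyFinite] {ℓ : V → Γ} {μ : Γ}

variable (T) in
/-- The restriction `g` of a labeling to the non-pendant vertices satisfies the conditions for
extending to a magic labeling of `T` with magic constant `μ`. The values of `g` at pendant vertices
are irrelevant. -/
structure IsMagicCore (g : V → Γ) (μ : Γ) : Prop where
  ne_zero : ∀ x, T.degree x ≠ 1 → g x ≠ 0
  apply_support : ∀ x, (pendantNeighbors T x).Nonempty → g x = μ
  hasNonzeroSum : ∀ x, T.degree x ≠ 1 →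
    HasNonzeroSum (pendantNeighbors T x) (μ - ∑ y ∈ innerNeighbors T x, g y)

lemma IsMagicLabeling.isMagicCore (hℓ : IsMagicLabeling T ℓ μ) : IsMagicCore T ℓ μ where
  ne_zero x _ := hℓ.1 x
  apply_support x := by
    rintro ⟨v, hv⟩
    rw [mem_pendantNeighbors] at hv
    exact hℓ.apply_eq_of_adj hv.1.symm hv.2
  hasNonzeroSum x _ := ⟨ℓ, fun y _ => hℓ.1 y, by
    rw [← hℓ.2 x, ← sum_pendantNeighbors_add_sum_innerNeighbors, add_sub_cancel_right]⟩

lemma IsMagicCore.exists_isMagicLabeling {g : V → Γ} (hg : IsMagicCore T g μ)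
    (hT : ∀ u v, T.Adj u v → T.degree u = 1 → T.degree v ≠ 1) :
    ∃ ℓ, IsMagicLabeling T ℓ μ := by
  choose! F hF hFsum using hg.hasNonzeroSum
  -- The sum has a single term, at the support vertex of `v`.
  let ℓ : V → Γ := fun v => if T.degree v = 1 then ∑ x ∈ T.neighborFinset v, F x v else g v
  have hℓ_pendant : ∀ v x, T.Adj v x → T.degree v = 1 → ℓ v = F x v := by
    intro v x hvx hv
    simp [ℓ, hv, neighborFinset_eq_singleton_of_degree_eq_one_s13 hvx hv]
  have hℓ_inner : ∀ x, T.degree x ≠ 1 → ℓ x = g x := fun x hx => if_neg hx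
  refine ⟨ℓ, fun v => ?_, fun v => ?_⟩ <;> by_cases hv : T.degree v = 1
  · obtain ⟨x, hvx, -⟩ := SimpleGraph.degree_eq_one_iff_existsUnique_adj.1 hv
    rw [hℓ_pendant v x hvx hv]
    exact hF x (hT v x hvx hv) v (mem_pendantNeighbors.2 ⟨hvx.symm, hv⟩)
  · rw [hℓ_inner v hv]
    exact hg.ne_zero v hv
  · obtain ⟨x, hvx, -⟩ := SimpleGraph.degree_eq_one_iff_existsUnique_adj.1 hv
    rw [neighborFinset_eq_singleton_of_degree_eq_one_s13 hvx hv, sum_singleton,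
      hℓ_inner x (hT v x hvx hv)]
    exact hg.apply_support x ⟨v, mem_pendantNeighbors.2 ⟨hvx.symm, hv⟩⟩
  · have hpendant : ∑ y ∈ pendantNeighbors T v, ℓ y = ∑ y ∈ pendantNeighbors T v, F v y :=
      sum_congr rfl fun y hy =>
        hℓ_pendant y v (mem_pendantNeighbors.1 hy).1.symm (mem_pendantNeighbors.1 hy).2
    have hinner : ∑ y ∈ innerNeighbors T v, ℓ y = ∑ y ∈ innerNeighbors T v, g y :=
      sum_congr rfl fun y hy => hℓ_inner y (mem_innerNeighbors.1 hy).2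
    rw [← sum_pendantNeighbors_add_sum_innerNeighbors, hpendant, hinner, hFsum v hv,
      sub_add_cancel]

end MagicCore

/-- A tree in which every vertex is at distance at most two from the non-pendant vertex `c`: a star,
a double star or a tree of diameter four. -/
structure IsRadiusTwoTree {V : Type*} (T : SimpleGraph V) [T.LocallyFinite] (c : V) : Prop where
  isTree : T.IsTree
  two_le_degree : 2 ≤ T.degree c
  dist_le_two : ∀ u, T.dist c u ≤ 2

namespace IsRadiusTwoTree

variable {V Γ : Type*} [AddCommGroup Γ] {T : SimpleGraph V} [T.LocallyFinite] {c x : V} {μ : Γ}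

lemma degree_center_ne_one (h : IsRadiusTwoTree T c) : T.degree c ≠ 1 :=
  (one_lt_two.trans_le h.two_le_degree).ne'

lemma dist_eq_one (h : IsRadiusTwoTree T c) (hx : x ≠ c) (hd : T.degree x ≠ 1) :
    T.dist c x = 1 := by
  have hpos := h.isTree.connected.pos_dist_of_ne hx.symm
  have hle := h.dist_le_two x
  have hne : T.dist c x ≠ 2 := fun h2 =>
    hd (degree_eq_one_of_forall_adj_dist_le h.isTree hx fun y _ => h2 ▸ h.dist_le_two y)
  lia

lemma innerNeighbors_eq_singleton (h : IsRadiusTwoTree T c) (hx : x ≠ c) (hd : T.degree x ≠ 1) :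
    innerNeighbors T x = {c} := by
  have hcx := h.dist_eq_one hx hd
  ext y
  rw [mem_innerNeighbors, mem_singleton]
  constructor
  · rintro ⟨hxy, hy⟩
    by_contra hyc
    exact h.isTree.dist_ne_of_adj c hxy (hcx.trans (h.dist_eq_one hyc hy).symm)
  · rintro rfl
    exact ⟨(SimpleGraph.dist_eq_one_iff_adj.1 hcx).symm, h.degree_center_ne_one⟩

lemma pendantNeighbors_nonempty (h : IsRadiusTwoTree T c) (hx : x ≠ c) (hd : T.degree x ≠ 1) :
    (pendantNeighbors T x).Nonempty := by
  have hcard := card_pendantNeighbors_add_card_innerNeighbors (T := T) (x := x)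
  rw [h.innerNeighbors_eq_singleton hx hd, card_singleton] at hcard
  exact card_pos.1 (by lia)

lemma exists_degree_eq_one (h : IsRadiusTwoTree T c) : ∃ v, T.degree v = 1 := by
  obtain ⟨x, hcx⟩ := (T.degree_pos_iff_exists_adj c).1 (two_pos.trans_le h.two_le_degree)
  by_cases hx : T.degree x = 1
  · exact ⟨x, hx⟩
  · obtain ⟨v, hv⟩ := h.pendantNeighbors_nonempty hcx.ne' hx
    exact ⟨v, (mem_pendantNeighbors.1 hv).2⟩

lemma exists_isMagicLabeling_iff (h : IsRadiusTwoTree T c) :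
    (∃ ℓ, IsMagicLabeling T ℓ μ) ↔ μ ≠ 0 ∧ ∃ a ≠ 0,
      ((pendantNeighbors T c).Nonempty → a = μ) ∧
      (∀ x, x ≠ c → T.degree x ≠ 1 → HasNonzeroSum (pendantNeighbors T x) (μ - a)) ∧
      HasNonzeroSum (pendantNeighbors T c) (μ - #(innerNeighbors T c) • μ) := by
  classical
  constructor
  · rintro ⟨ℓ, hℓ⟩
    obtain ⟨v, hv⟩ := h.exists_degree_eq_one
    have hcore := hℓ.isMagicCore
    refine ⟨hℓ.constant_ne_zero hv, ℓ c, hℓ.1 c, hcore.apply_support c, fun x hx hd => ?_, ?_⟩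
    · simpa [h.innerNeighbors_eq_singleton hx hd] using hcore.hasNonzeroSum x hd
    · have hinner : ∀ y ∈ innerNeighbors T c, ℓ y = μ := fun y hy =>
        have ⟨hcy, hd⟩ := mem_innerNeighbors.1 hy
        hcore.apply_support y (h.pendantNeighbors_nonempty hcy.ne' hd)
      rw [← sum_eq_card_nsmul hinner]
      exact hcore.hasNonzeroSum c h.degree_center_ne_one
  · rintro ⟨hμ, a, ha, haμ, hinner, hcenter⟩
    let g : V → Γ := Function.update (fun _ => μ) c a
    have hgc : g c = a := Function.update_self ..
    have hgx : ∀ x, x ≠ c → g x = μ := fun x hx => Function.update_of_ne hx ..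
    have hcore : IsMagicCore T g μ := by
      constructor <;> intro x hx <;> rcases eq_or_ne x c with rfl | hxc
      · rwa [hgc]
      · rwa [hgx x hxc]
      · rw [hgc, haμ hx]
      · exact hgx x hxc
      · rwa [sum_eq_card_nsmul fun y hy => hgx y (mem_innerNeighbors.1 hy).1.ne']
      · rw [h.innerNeighbors_eq_singleton hxc hx, sum_singleton, hgc]
        exact hinner x hxc hx
    exact hcore.exists_isMagicLabeling fun _ _ =>
      degree_ne_one_of_adj_of_degree_eq_one h.isTree.connected h.two_le_degree

lemma hasNonzeroSum_pendantNeighbors_iff (h : IsRadiusTwoTree T c) (hΓ : 3 ≤ ENat.card Γ)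
    (hx : x ≠ c) (hd : T.degree x ≠ 1) {t : Γ} :
    HasNonzeroSum (pendantNeighbors T x) t ↔ t ≠ 0 ∨ IsStrongSupport T x := by
  have hpos := (h.pendantNeighbors_nonempty hx hd).card_pos
  rw [hasNonzeroSum_iff hΓ, isStrongSupport_iff, or_iff_not_imp_right, not_le]
  constructor
  · exact fun ht hlt => ht.2 (by lia)
  · exact fun ht => ⟨fun h0 => absurd h0 hpos.ne', fun h1 => ht (by lia)⟩

lemma isVertexMagic_iff_of_isNeutral (h : IsRadiusTwoTree T c) (hΓ : 3 ≤ ENat.card Γ)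
    (hc : IsNeutral T c) :
    IsVertexMagic T Γ ↔ ∃ g : Γ, g ≠ 0 ∧ ((T.degree c : ℤ) - 1) • g = 0 := by
  have hempty := card_eq_zero.1 (isNeutral_iff.1 hc).2
  rw [IsVertexMagic, exists_comm]
  refine exists_congr fun μ => ?_
  rw [h.exists_isMagicLabeling_iff, sub_card_innerNeighbors_nsmul, hempty, hasNonzeroSum_empty]
  simp only [Finset.not_nonempty_empty, card_empty, Nat.cast_zero, zero_add, neg_eq_zero]
  refine and_congr_right fun _ => ⟨fun ⟨_, _, _, _, hμ⟩ => hμ, fun hμ => ?_⟩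
  obtain ⟨a, ha, haμ⟩ := ENat.exists_ne_ne_of_three_le hΓ 0 μ
  refine ⟨a, ha, False.elim, fun x hx hd => ?_, hμ⟩
  exact (h.hasNonzeroSum_pendantNeighbors_iff hΓ hx hd).2 (.inl (sub_ne_zero.2 haμ.symm))

lemma exists_isMagicLabeling_iff_of_nonempty (h : IsRadiusTwoTree T c) (hΓ : 3 ≤ ENat.card Γ)
    (hc : (pendantNeighbors T c).Nonempty) :
    (∃ ℓ, IsMagicLabeling T ℓ μ) ↔ (∀ x, x ≠ c → T.degree x ≠ 1 → IsStrongSupport T x) ∧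
      μ ≠ 0 ∧ (#(pendantNeighbors T c) = 1 → ((T.degree c : ℤ) - 2) • μ ≠ 0) := by
  have hstrong : (∀ x, x ≠ c → T.degree x ≠ 1 → HasNonzeroSum (pendantNeighbors T x) (0 : Γ)) ↔
      ∀ x, x ≠ c → T.degree x ≠ 1 → IsStrongSupport T x :=
    forall₃_congr fun x hx hd => by simp [h.hasNonzeroSum_pendantNeighbors_iff hΓ hx hd]
  have hcenter : HasNonzeroSum (pendantNeighbors T c) (μ - #(innerNeighbors T c) • μ) ↔
      (#(pendantNeighbors T c) = 1 → ((T.degree c : ℤ) - 2) • μ ≠ 0) := by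
    rw [hasNonzeroSum_iff hΓ, sub_card_innerNeighbors_nsmul, neg_ne_zero]
    refine (and_iff_right fun h0 => absurd h0 hc.card_pos.ne').trans (imp_congr_right fun h1 => ?_)
    rw [h1, Nat.cast_one, one_add_one_eq_two]
  rw [h.exists_isMagicLabeling_iff, hcenter]
  constructor
  · rintro ⟨hμ, a, -, haμ, hinner, hμ2⟩
    obtain rfl := haμ hc
    rw [sub_self, hstrong] at hinner
    exact ⟨hinner, hμ, hμ2⟩
  · rintro ⟨hinner, hμ, hμ2⟩
    rw [← hstrong, ← sub_self μ] at hinner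
    exact ⟨hμ, μ, hμ, fun _ => rfl, hinner, hμ2⟩

lemma isVertexMagic_iff_of_isWeakSupport (h : IsRadiusTwoTree T c) (hΓ : 3 ≤ ENat.card Γ)
    (hc : IsWeakSupport T c) :
    IsVertexMagic T Γ ↔ (∀ x, x ≠ c → T.degree x ≠ 1 → IsStrongSupport T x) ∧
      ∃ g : Γ, g ≠ 0 ∧ ((T.degree c : ℤ) - 2) • g ≠ 0 := by
  have hcard := isWeakSupport_iff.1 hc
  rw [IsVertexMagic, exists_comm, ← exists_and_left]
  refine exists_congr fun μ => ?_
  rw [h.exists_isMagicLabeling_iff_of_nonempty hΓ (card_pos.1 (by lia)), forall_prop_of_true hcard]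

lemma isVertexMagic_iff_of_isStrongSupport (h : IsRadiusTwoTree T c) (hΓ : 3 ≤ ENat.card Γ)
    (hc : IsStrongSupport T c) :
    IsVertexMagic T Γ ↔ ∀ x, T.degree x ≠ 1 → IsStrongSupport T x := by
  have hcard := isStrongSupport_iff.1 hc
  obtain ⟨g, hg, -⟩ := ENat.exists_ne_ne_of_three_le hΓ 0 0
  rw [IsVertexMagic, exists_comm]
  simp only [h.exists_isMagicLabeling_iff_of_nonempty hΓ (card_pos.1 (by lia)), exists_and_left]
  constructor
  · rintro ⟨hstrong, -⟩ x hd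
    obtain rfl | hx := eq_or_ne x c
    exacts [hc, hstrong x hx hd]
  · exact fun hstrong => ⟨fun x _ hd => hstrong x hd, g, hg, fun h1 => by lia⟩

end IsRadiusTwoTree

theorem stmt_13_general {V Γ : Type*} [AddCommGroup Γ] (hΓ : 3 ≤ ENat.card Γ)
    {T : SimpleGraph V} [T.LocallyFinite] (hT : T.IsTree) {c : V} (hdeg : 2 ≤ T.degree c)
    (hc : ∀ u : V, T.dist c u ≤ 2) :
    IsVertexMagic T Γ ↔
      (∀ x : V, T.degree x ≠ 1 → IsStrongSupport T x) ∨
      (IsWeakSupport T c ∧ (∀ x : V, x ≠ c → T.degree x ≠ 1 → IsStrongSupport T x) ∧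
        ∃ g : Γ, g ≠ 0 ∧ ((T.degree c : ℤ) - 2) • g ≠ 0) ∨
      (IsNeutral T c ∧ ∃ g : Γ, g ≠ 0 ∧ ((T.degree c : ℤ) - 1) • g = 0) := by
  have h : IsRadiusTwoTree T c := ⟨hT, hdeg, hc⟩
  have hstrong := isStrongSupport_iff (T := T) (x := c)
  have hweak := isWeakSupport_iff (T := T) (x := c)
  have hneutral := isNeutral_iff (T := T) (x := c)
  have hnot_strong (hn : ¬ IsStrongSupport T c) :
      ¬ ∀ x, T.degree x ≠ 1 → IsStrongSupport T x := fun hall => hn (hall c h.degree_center_ne_one)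
  obtain hcard | hcard | hcard : #(pendantNeighbors T c) = 0 ∨ #(pendantNeighbors T c) = 1 ∨
      2 ≤ #(pendantNeighbors T c) := by lia
  · have hn : IsNeutral T c := hneutral.2 ⟨h.degree_center_ne_one, hcard⟩
    have hnw : ¬ IsWeakSupport T c := by lia
    simp only [h.isVertexMagic_iff_of_isNeutral hΓ hn, hnot_strong (by lia), hnw, hn, false_and,
      true_and, false_or]
  · have hw : IsWeakSupport T c := hweak.2 hcard
    have hnn : ¬ IsNeutral T c := by lia
    simp only [h.isVertexMagic_iff_of_isWeakSupport hΓ hw, hnot_strong (by lia), hw, hnn,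
      false_and, true_and, false_or, or_false]
  · have hnw : ¬ IsWeakSupport T c := by lia
    have hnn : ¬ IsNeutral T c := by lia
    simp only [h.isVertexMagic_iff_of_isStrongSupport hΓ (hstrong.2 hcard), hnw, hnn, false_and,
      or_false]

/-- Let `Γ` be an infinite abelian torsion group and `T` a finite tree of
diameter 4 with central vertex `vc`. Then `T` is `Γ`-vertex magic iff (i) every
non-pendant vertex is a strong support vertex; or (ii) `vc` is a weak support vertex,
every other non-pendant vertex is a strong support vertex, and there is `g ≠ 0` with
`((deg vc : ℤ) - 2) • g ≠ 0`; or (iii) `vc` is neutral and there is `g ≠ 0` with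
`((deg vc : ℤ) - 1) • g = 0`. -/
theorem stmt_13 {V Γ : Type*} [Fintype V] [DecidableEq V]
    [AddCommGroup Γ] [Infinite Γ]
    (htorsion : ∀ g : Γ, IsOfFinAddOrder g)
    (T : SimpleGraph V) [DecidableRel T.Adj] (hT : T.IsTree)
    (hdiam : (∀ a b : V, T.dist a b ≤ 4) ∧ ∃ a b : V, T.dist a b = 4)
    (vc : V) (hvc : ∀ u : V, T.dist vc u ≤ 2) :
    (∃ (ℓ : V → Γ) (μ : Γ), (∀ w, ℓ w ≠ 0) ∧
        ∀ w, ∑ x ∈ T.neighborFinset w, ℓ x = μ) ↔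
      ((∀ x : V, T.degree x ≠ 1 →
          ∃ a b : V, a ≠ b ∧ T.Adj x a ∧ T.Adj x b ∧ T.degree a = 1 ∧ T.degree b = 1) ∨
       ((∃! u : V, T.Adj vc u ∧ T.degree u = 1) ∧
        (∀ x : V, x ≠ vc → T.degree x ≠ 1 →
          ∃ a b : V, a ≠ b ∧ T.Adj x a ∧ T.Adj x b ∧ T.degree a = 1 ∧ T.degree b = 1) ∧
        (∃ g : Γ, g ≠ 0 ∧ ((T.degree vc : ℤ) - 2) • g ≠ 0)) ∨
       ((T.degree vc ≠ 1 ∧ ¬ ∃ u : V, T.Adj vc u ∧ T.degree u = 1) ∧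
        (∃ g : Γ, g ≠ 0 ∧ ((T.degree vc : ℤ) - 1) • g = 0))) := by
  obtain ⟨a, b, hab⟩ := hdiam.2
  exact stmt_13_general (by simp) hT
    (two_le_degree_of_dist_eq_four hT.connected hab (hvc a) (hvc b)) hvc
end

section
/- Let Γ be an infinite torsion-free additive abelian group (if n • g = 0 for an integer n ≠ 0 then g = 0). Let T be a finite tree of diameter 5 with central vertices v_{c1} and v_{c2} (the two adjacent vertices each satisfying dist(v_{ci}, u) ≤ 3 for every vertex u), and suppose v_{c1} is a support vertex and v_{c2} is not a support vertex. Then T is not Γ-vertex magic. -/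
/-!
A pendant vertex weighs the label of its only neighbour, so every support vertex is labelled `μ`.
If a vertex `v` has neighbours and all of them are support vertices, then `μ ≠ 0` and the weight of
`v` gives `deg v • μ = μ`, so torsion-freeness forces `deg v = 1`.

This applies to `v = vc₂`. A neighbour `x ≠ vc₁` of `vc₂` is at distance `2` from `vc₁` and is not
pendant, so it has a neighbour at distance `3` from `vc₁`, which is pendant because no vertex is
further away. But if `vc₂` is pendant, all other vertices are within distance `2` of `vc₁`, and no
two vertices are at distance `5`.
-/

section Distance

variable {V : Type*} {G : SimpleGraph V}

lemma eq_of_adj_of_dist_lt (hG : G.IsAcyclic) {r v a b : V} (hav : G.Adj a v) (hbv : G.Adj b v)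
    (ha : G.dist r a < G.dist r v) (hb : G.dist r b < G.dist r v) : a = b := by
  have hrv : G.Reachable r v := .of_dist_ne_zero (by omega)
  have geodesic_through : ∀ w, G.Adj w v → G.dist r w < G.dist r v →
      ∃ p : G.Walk r v, p.IsPath ∧ p.penultimate = w := fun w hwv hw ↦ by
    obtain ⟨p, hp⟩ := (hrv.trans hwv.symm.reachable).exists_walk_length_eq_dist
    have hlen : (p.concat hwv).length = G.dist r v := by
      have hle := SimpleGraph.dist_le (p.concat hwv)
      rw [SimpleGraph.Walk.length_concat] at hle ⊢
      omega
    exact ⟨p.concat hwv, SimpleGraph.Walk.isPath_of_length_eq_dist _ hlen, by simp⟩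
  obtain ⟨p, hp, rfl⟩ := geodesic_through a hav ha
  obtain ⟨q, hq, rfl⟩ := geodesic_through b hbv hb
  have hpq : p = q := congrArg Subtype.val ((hG.subsingleton_path r v).elim ⟨p, hp⟩ ⟨q, hq⟩)
  exact congrArg SimpleGraph.Walk.penultimate hpq

lemma exists_adj_dist_lt {r v : V} (hv : G.dist r v ≠ 0) :
    ∃ w, G.Adj w v ∧ G.dist r w < G.dist r v := by
  obtain ⟨p, hp⟩ := SimpleGraph.exists_walk_of_dist_ne_zero hv
  have hadj : G.Adj p.penultimate v :=
    p.adj_penultimate (SimpleGraph.Walk.not_nil_iff_lt_length.mpr (by omega))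
  refine ⟨p.penultimate, hadj, ?_⟩
  calc G.dist r p.penultimate ≤ p.dropLast.length := SimpleGraph.dist_le _
    _ < (p.dropLast.concat hadj).length := by simp only [SimpleGraph.Walk.length_concat, lt_add_one]
    _ = G.dist r v := by rw [SimpleGraph.Walk.concat_dropLast, hp]

lemma degree_eq_one_of_forall_adj_dist_le_s18 (hG : G.IsAcyclic) {r v : V}
    [Fintype (G.neighborSet v)] (hv : G.dist r v ≠ 0)
    (hmax : ∀ w, G.Adj v w → G.dist r w ≤ G.dist r v) : G.degree v = 1 := by
  obtain ⟨a, hav, ha⟩ := exists_adj_dist_lt hv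
  refine SimpleGraph.degree_eq_one_iff_existsUnique_adj.mpr ⟨a, hav.symm, fun b hvb ↦ ?_⟩
  have hb : G.dist r b < G.dist r v := by
    have := hmax b hvb
    have := hG.dist_eq_dist_add_one_of_adj_of_reachable r hvb (.of_dist_ne_zero hv)
    omega
  exact eq_of_adj_of_dist_lt hG hvb.symm hav hb ha

lemma dist_eq_dist_add_one_of_degree_eq_one {v w u : V} [Fintype (G.neighborSet v)]
    (hdeg : G.degree v = 1) (hvw : G.Adj v w) (hvu : G.Reachable v u) (huv : u ≠ v) :
    G.dist v u = G.dist w u + 1 := by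
  obtain ⟨p, hp⟩ := hvu.exists_walk_length_eq_dist
  cases p with
  | nil => exact absurd rfl huv
  | cons hvx q =>
    obtain rfl := (SimpleGraph.degree_eq_one_iff_existsUnique_adj.mp hdeg).unique hvx hvw
    rw [SimpleGraph.Walk.length_cons] at hp
    have hle := SimpleGraph.dist_le q
    have hge := hvx.reachable.dist_triangle_left u
    rw [SimpleGraph.dist_eq_one_iff_adj.mpr hvx] at hge
    omega

lemma dist_le_two_mul_of_degree_eq_one (hG : G.Connected) {v : V} [Fintype (G.neighborSet v)]
    (hdeg : G.degree v = 1) {n : ℕ} (hn : 1 ≤ n) (hv : ∀ u, G.dist v u ≤ n + 1) (a b : V) :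
    G.dist a b ≤ 2 * n := by
  obtain ⟨w, hvw, -⟩ := SimpleGraph.degree_eq_one_iff_existsUnique_adj.mp hdeg
  have hw : ∀ u, G.dist w u ≤ n := fun u ↦ by
    rcases eq_or_ne u v with rfl | huv
    · rwa [SimpleGraph.dist_eq_one_iff_adj.mpr hvw.symm]
    · have := dist_eq_dist_add_one_of_degree_eq_one hdeg hvw (hG v u) huv
      have := hv u
      omega
  calc G.dist a b ≤ G.dist a w + G.dist w b := hG.dist_triangle
    _ = G.dist w a + G.dist w b := by rw [SimpleGraph.dist_comm]
    _ ≤ 2 * n := by linarith [hw a, hw b]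

end Distance

section Support

variable {V : Type*} {G : SimpleGraph V} [G.LocallyFinite]

variable (G) in
/-- A support vertex of a graph: a vertex adjacent to a pendant vertex, that is, to a vertex of
degree one. -/
def IsSupportVertex (v : V) : Prop :=
  ∃ u, G.Adj v u ∧ G.degree u = 1

lemma isSupportVertex_of_forall_dist_le (hG : G.IsAcyclic) {c x : V} (hx : G.dist c x ≠ 0)
    (hdeg : G.degree x ≠ 1) (hc : ∀ u, G.dist c u ≤ G.dist c x + 1) : IsSupportVertex G x := by
  obtain ⟨y, hxy, hlt⟩ : ∃ y, G.Adj x y ∧ G.dist c x < G.dist c y := by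
    contrapose! hdeg
    exact degree_eq_one_of_forall_adj_dist_le_s18 hG hx hdeg
  exact ⟨y, hxy, degree_eq_one_of_forall_adj_dist_le_s18 hG (Nat.ne_zero_of_lt hlt)
    fun z _ ↦ (hc z).trans hlt⟩

lemma isSupportVertex_of_adj_of_not_isSupportVertex (hG : G.IsAcyclic) {c v x : V}
    (hcv : G.Adj c v) (hvx : G.Adj v x) (hc : ∀ u, G.dist c u ≤ 3) (hcs : IsSupportVertex G c)
    (hvs : ¬ IsSupportVertex G v) : IsSupportVertex G x := by
  rcases eq_or_ne x c with rfl | hxc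
  · exact hcs
  have hcx : G.dist c x = 2 := by
    have hpos := (hcv.reachable.trans hvx.reachable).pos_dist_of_ne hxc.symm
    have hdist := hG.dist_eq_dist_add_one_of_adj_of_reachable c hvx hcv.reachable
    rw [SimpleGraph.dist_eq_one_iff_adj.mpr hcv] at hdist
    omega
  exact isSupportVertex_of_forall_dist_le (c := c) hG (by omega) (fun hdeg ↦ hvs ⟨x, hvx, hdeg⟩)
    (by simpa only [hcx] using hc)

end Support

section Magic

variable {V Γ : Type*} {G : SimpleGraph V} [G.LocallyFinite]

variable (G) in
/-- A `Γ`-vertex magic labeling of a locally finite graph with magic constant `μ`: all labels are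
nonzero, and the labels on every open neighbourhood add up to `μ`. -/
structure IsVertexMagicLabeling [AddCommMonoid Γ] (ℓ : V → Γ) (μ : Γ) : Prop where
  ne_zero : ∀ v, ℓ v ≠ 0
  sum_neighborFinset : ∀ v, ∑ u ∈ G.neighborFinset v, ℓ u = μ

namespace IsVertexMagicLabeling

lemma apply_eq_of_isSupportVertex [AddCommMonoid Γ] {ℓ : V → Γ} {μ : Γ}
    (h : IsVertexMagicLabeling G ℓ μ) {v : V} (hv : IsSupportVertex G v) : ℓ v = μ := by
  obtain ⟨u, hvu, hu⟩ := hv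
  have hnbr : G.neighborFinset u = {v} :=
    (Finset.eq_of_subset_of_card_le (by simpa using hvu.symm) (by simp [hu])).symm
  rw [← h.sum_neighborFinset u, hnbr, Finset.sum_singleton]

lemma degree_eq_one_of_forall_adj_isSupportVertex [AddCancelCommMonoid Γ] [IsAddTorsionFree Γ]
    {ℓ : V → Γ} {μ : Γ} (h : IsVertexMagicLabeling G ℓ μ) {v x : V}
    (hvx : G.Adj v x) (hv : ∀ y, G.Adj v y → IsSupportVertex G y) : G.degree v = 1 := by
  have hnbr : ∀ y ∈ G.neighborFinset v, ℓ y = μ := fun y hy ↦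
    h.apply_eq_of_isSupportVertex (hv y ((G.mem_neighborFinset v y).mp hy))
  have hμ : μ ≠ 0 := hnbr x ((G.mem_neighborFinset v x).mpr hvx) ▸ h.ne_zero x
  refine (IsAddLeftRegular.all μ).nsmul_injective hμ ?_
  calc G.degree v • μ = ∑ y ∈ G.neighborFinset v, ℓ y := (Finset.sum_eq_card_nsmul hnbr).symm
    _ = 1 • μ := by rw [h.sum_neighborFinset, one_nsmul]

end IsVertexMagicLabeling

end Magic

lemma isAddTorsionFree_of_zsmul_eq_zero {Γ : Type*} [AddCommGroup Γ]
    (h : ∀ (g : Γ) (n : ℤ), n ≠ 0 → n • g = 0 → g = 0) : IsAddTorsionFree Γ :=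
  .of_not_isOfFinAddOrder fun g hg hfin ↦ by
    obtain ⟨n, hn, hng⟩ := isOfFinAddOrder_iff_zsmul_eq_zero.mp hfin
    exact hg (h g n hn hng)

/-- Let `Γ` be an infinite torsion-free abelian group and `T` a finite
tree of diameter 5 with adjacent central vertices `vc₁`, `vc₂`, where `vc₁` is a
support vertex and `vc₂` is not. Then `T` is not `Γ`-vertex magic. -/
theorem stmt_18 {V Γ : Type*} [Fintype V] [DecidableEq V]
    [AddCommGroup Γ] [Infinite Γ]
    (htf : ∀ (g : Γ) (n : ℤ), n ≠ 0 → n • g = 0 → g = 0)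
    (T : SimpleGraph V) [DecidableRel T.Adj] (hT : T.IsTree)
    (hdiam : (∀ a b : V, T.dist a b ≤ 5) ∧ ∃ a b : V, T.dist a b = 5)
    (vc₁ vc₂ : V) (hadj : T.Adj vc₁ vc₂)
    (hc₁ : ∀ u : V, T.dist vc₁ u ≤ 3) (hc₂ : ∀ u : V, T.dist vc₂ u ≤ 3)
    (hs₁ : ∃ u : V, T.Adj vc₁ u ∧ T.degree u = 1)
    (hns₂ : ¬ ∃ u : V, T.Adj vc₂ u ∧ T.degree u = 1) :
    ¬ ∃ (ℓ : V → Γ) (μ : Γ), (∀ w, ℓ w ≠ 0) ∧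
        ∀ w, ∑ x ∈ T.neighborFinset w, ℓ x = μ := by
  rintro ⟨ℓ, μ, hne, hsum⟩
  have : IsAddTorsionFree Γ := isAddTorsionFree_of_zsmul_eq_zero htf
  have hℓ : IsVertexMagicLabeling T ℓ μ := ⟨hne, hsum⟩
  have hsupp : ∀ x, T.Adj vc₂ x → IsSupportVertex T x := fun x hx ↦
    isSupportVertex_of_adj_of_not_isSupportVertex hT.isAcyclic hadj hx hc₁ hs₁ hns₂
  have hpendant : T.degree vc₂ = 1 :=
    hℓ.degree_eq_one_of_forall_adj_isSupportVertex hadj.symm hsupp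
  obtain ⟨a, b, hab⟩ := hdiam.2
  have hle : T.dist a b ≤ 2 * 2 :=
    dist_le_two_mul_of_degree_eq_one hT.connected hpendant one_le_two hc₂ a b
  omega
end
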